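/- arXiv:1011.6420 — 3 statements merged into one kernel-verified Lean document; each statement's English description precedes it below -/
import Mathlib

section
/- Let m > 1, n ≥ 1, λ = ((m−1)n + 2)^{−1}, and let 0 < a ≤ 1/4. Set C = a^{λ/2}, U(x,t) = ( C(t+1)^{2λ} − (λ/2)|x|² ) / (t+1), and c(t) = √C (t+1)^{λ−1}. Then for all t with 0 ≤ t ≤ a^{−1} and all x with U(x,t) ≥ 0, one has |DU(x,t)| ≤ c(t) and a·U(x,t) ≤ c(t). -/
open Real MeasureTheory Metric Set Filter
open scoped RealInnerProductSpace

/-- The spatial Laplacian of a function on `ℝⁿ`, as a sum of second partial derivatives. -/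
noncomputable def lapl {n : ℕ} (f : EuclideanSpace ℝ (Fin n) → ℝ)
    (x : EuclideanSpace ℝ (Fin n)) : ℝ :=
  ∑ i : Fin n, fderiv ℝ (fun y => fderiv ℝ f y (EuclideanSpace.single i 1)) x
    (EuclideanSpace.single i 1)

/-- **Gradient and height bounds along the Barenblatt barrier.** With `C = a^{λ/2}` and
`c(t) = √C (t+1)^{λ−1}`, on the region `{U ≥ 0}` and for `0 ≤ t ≤ a⁻¹` one has
`|DU| ≤ c(t)` and `aU ≤ c(t)`. -/
theorem barenblatt_gradient_height_bounds
    {n : ℕ} (hn : 1 ≤ n) (m : ℝ) (hm : 1 < m)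
    (lam a : ℝ) (hlam : lam = ((m - 1) * n + 2)⁻¹) (ha : 0 < a) (ha4 : a ≤ 1 / 4)
    (C : ℝ) (hC : C = a ^ (lam / 2))
    (U : EuclideanSpace ℝ (Fin n) → ℝ → ℝ)
    (hU : ∀ x t, U x t = (C * (t + 1) ^ (2 * lam) - lam / 2 * ‖x‖ ^ 2) / (t + 1))
    (c : ℝ → ℝ) (hc : ∀ t, c t = Real.sqrt C * (t + 1) ^ (lam - 1)) :
    ∀ (x : EuclideanSpace ℝ (Fin n)) (t : ℝ), 0 ≤ t → t ≤ a⁻¹ → 0 ≤ U x t →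
      ‖gradient (fun y => U y t) x‖ ≤ c t ∧ a * U x t ≤ c t := by
  intro x t ht hta hUx
  have hn' : (1 : ℝ) ≤ n := by exact_mod_cast hn
  have hden : 2 < (m - 1) * n + 2 := by nlinarith
  have hl0 : 0 < lam := by rw [hlam]; positivity
  have hl1 : 2 * lam ≤ 1 := by
    rw [hlam, ← div_eq_mul_inv, div_le_one (by linarith)]
    exact hden.le
  have hC0 : 0 < C := by rw [hC]; positivity
  have hC1 : C ≤ 1 := by
    rw [hC]; exact Real.rpow_le_one ha.le (by linarith) (by linarith)
  obtain ⟨s, hs⟩ : ∃ s, s = t + 1 := ⟨_, rfl⟩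
  have hs1 : 1 ≤ s := by linarith
  have hs0 : 0 < s := by linarith
  obtain ⟨P, hP⟩ : ∃ P, P = s ^ lam := ⟨_, rfl⟩
  have hP0 : 0 < P := by rw [hP]; positivity
  have hPsq : s ^ (2 * lam) = P ^ 2 := by
    rw [hP, two_mul, Real.rpow_add hs0, sq]
  have hPs : P ^ 2 ≤ s := by
    rw [← hPsq]
    calc s ^ (2 * lam) ≤ s ^ (1 : ℝ) := Real.rpow_le_rpow_of_exponent_le hs1 hl1
      _ = s := Real.rpow_one s
  have hcv : c t = Real.sqrt C * P / s := by
    rw [hc, ← hs, Real.rpow_sub hs0, Real.rpow_one, ← hP, mul_div_assoc]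
  obtain ⟨S, hS⟩ : ∃ S, S = Real.sqrt C := ⟨_, rfl⟩
  have hS0 : 0 < S := by rw [hS]; positivity
  have hSC : C = S ^ 2 := by rw [hS, Real.sq_sqrt hC0.le]
  have hS1 : S ≤ 1 := by rw [hS]; exact Real.sqrt_le_one.mpr hC1
  have hnum : lam / 2 * ‖x‖ ^ 2 ≤ S ^ 2 * P ^ 2 := by
    rw [hU, ← hs, hPsq, hSC] at hUx
    have := (le_div_iff₀ hs0).mp hUx
    rw [zero_mul] at this
    linarith
  rw [hcv, ← hS]
  constructor
  · have hg : HasGradientAt (fun y => U y t) ((-(lam / s)) • x) x := by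
      rw [hasGradientAt_iff_hasFDerivAt]
      have h1 := (((hasStrictFDerivAt_norm_sq x).hasFDerivAt.const_mul (lam / 2)).const_sub
        (C * P ^ 2)).mul_const (s⁻¹)
      have he : (fun y => U y t) = fun y => (C * P ^ 2 - lam / 2 * ‖y‖ ^ 2) * s⁻¹ := by
        funext y
        rw [hU, ← hs, hPsq, div_eq_mul_inv]
      rw [he]
      refine h1.congr_fderiv ?_
      ext y
      simp
      ring
    rw [hg.gradient, norm_smul, norm_neg, Real.norm_of_nonneg (by positivity), div_mul_eq_mul_div]
    refine div_le_div_of_nonneg_right ?_ hs0.le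
    refine abs_le_of_sq_le_sq' ?_ (by positivity) |>.2
    have : 0 ≤ S ^ 2 * P ^ 2 := by positivity
    calc (lam * ‖x‖) ^ 2 = 2 * lam * (lam / 2 * ‖x‖ ^ 2) := by ring
      _ ≤ 2 * lam * (S ^ 2 * P ^ 2) := by gcongr
      _ ≤ 1 * (S ^ 2 * P ^ 2) := by gcongr
      _ = (S * P) ^ 2 := by ring
  · have hsa : a * s ≤ 1 + a := by
      have := mul_le_mul_of_nonneg_left hta ha.le
      rw [mul_inv_cancel₀ ha.ne'] at this
      rw [hs]; linarith
    have haP : a * P ≤ 1 := by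
      refine abs_le_of_sq_le_sq' ?_ (by norm_num) |>.2
      nlinarith [mul_le_mul_of_nonneg_left hPs (sq_nonneg a)]
    have haPS : a * P * S ≤ 1 := mul_le_one₀ haP hS0.le hS1
    rw [hU, ← hs, hPsq, hSC, ← mul_div_assoc]
    refine div_le_div_of_nonneg_right ?_ hs0.le
    have h2 : 0 ≤ a * (lam / 2 * ‖x‖ ^ 2) := by positivity
    have h3 : 0 < S * P := by positivity
    nlinarith
end

section
/- Let m > 1, n ≥ 1, λ = ((m−1)n + 2)^{−1}, C₁ > 0, x* ∈ ℝ^n, and let 0 < a ≤ 1/4. Set C = a^{λ/2}, U(x,t) = ( C(t+1)^{2λ} − (λ/2)|x|² ) / (t+1), c(t) = √C (t+1)^{λ−1}, and define Ũ(x,t) = U(x − x*, t) − 2C₁ a ∫₀^t c(s) ds. Then at every point (x,t) with 0 ≤ t ≤ a^{−1} and Ũ(x,t) > 0, one has Ũ_t ≤ (m−1)ŨΔŨ + |DŨ|² − C₁ a (|DŨ| + a Ũ). -/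
open Real MeasureTheory Metric Set Filter
open scoped RealInnerProductSpace

lemma quad_hasFDerivAt {n : ℕ} (A k : ℝ) (xs y : EuclideanSpace ℝ (Fin n)) :
    HasFDerivAt (fun y => A - k * ‖y - xs‖ ^ 2)
      (innerSL ℝ (-(2 * k) • (y - xs))) y := by
  have h1 : HasFDerivAt (fun y : EuclideanSpace ℝ (Fin n) => y - xs)
      (ContinuousLinearMap.id ℝ _) y := (hasFDerivAt_id y).sub_const xs
  have h2 := (h1.norm_sq.const_mul k).const_sub A
  refine h2.congr_fderiv ?_
  ext v
  simp [inner_smul_left]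
  ring

lemma quad_gradient {n : ℕ} (A k : ℝ) (xs y : EuclideanSpace ℝ (Fin n)) :
    gradient (fun y => A - k * ‖y - xs‖ ^ 2) y = -(2 * k) • (y - xs) := by
  apply HasGradientAt.gradient
  rw [hasGradientAt_iff_hasFDerivAt]
  refine (quad_hasFDerivAt A k xs y).congr_fderiv ?_
  ext v
  simp

lemma quad_lapl {n : ℕ} (A k : ℝ) (xs x : EuclideanSpace ℝ (Fin n)) :
    lapl (fun y => A - k * ‖y - xs‖ ^ 2) x = -(2 * k) * n := by
  have key : ∀ i : Fin n, fderiv ℝ (fun y => fderiv ℝ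
      (fun y : EuclideanSpace ℝ (Fin n) => A - k * ‖y - xs‖ ^ 2) y
      (EuclideanSpace.single i 1)) x (EuclideanSpace.single i 1) = -(2 * k) := by
    intro i
    have h1 : (fun y => fderiv ℝ
      (fun y : EuclideanSpace ℝ (Fin n) => A - k * ‖y - xs‖ ^ 2) y
      (EuclideanSpace.single i 1)) =
      fun y => -(2 * k) * (innerSL ℝ (EuclideanSpace.single i (1 : ℝ)) (y - xs)) := by
      funext y
      rw [(quad_hasFDerivAt A k xs y).fderiv]
      simp only [innerSL_apply_apply, inner_smul_left]
      rw [real_inner_comm]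
      simp
    rw [h1]
    have h2 : HasFDerivAt (fun y : EuclideanSpace ℝ (Fin n) => y - xs)
      (ContinuousLinearMap.id ℝ _) x := (hasFDerivAt_id x).sub_const xs
    have h3 := (((innerSL ℝ (EuclideanSpace.single i (1 : ℝ))).hasFDerivAt).comp x h2).const_mul
      (-(2 * k))
    have h4 := h3.fderiv
    simp only [Function.comp_def] at h4
    rw [h4]
    simp
  unfold lapl
  rw [Finset.sum_congr rfl (fun i _ => key i)]
  simp
  ring

set_option maxHeartbeats 2000000 in
/-- **The lowered Barenblatt profile is a subsolution with drift error.** With `C = a^{λ/2}`,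
`c(t) = √C(t+1)^{λ−1}` and `Ũ(x,t) = U(x−x*,t) − 2C₁a ∫₀ᵗ c`, at every point of
positivity of `Ũ` with `0 ≤ t ≤ a⁻¹` one has
`Ũ_t ≤ (m−1)ŨΔŨ + |DŨ|² − C₁a(|DŨ| + aŨ)`. -/
theorem lowered_barenblatt_subsolution
    {n : ℕ} (hn : 1 ≤ n) (m : ℝ) (hm : 1 < m)
    (lam C₁ a : ℝ) (hlam : lam = ((m - 1) * n + 2)⁻¹) (hC₁ : 0 < C₁)
    (ha : 0 < a) (ha4 : a ≤ 1 / 4)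
    (xs : EuclideanSpace ℝ (Fin n))
    (C : ℝ) (hC : C = a ^ (lam / 2))
    (U : EuclideanSpace ℝ (Fin n) → ℝ → ℝ)
    (hU : ∀ x t, U x t = (C * (t + 1) ^ (2 * lam) - lam / 2 * ‖x‖ ^ 2) / (t + 1))
    (c : ℝ → ℝ) (hc : ∀ t, c t = Real.sqrt C * (t + 1) ^ (lam - 1))
    (Ut : EuclideanSpace ℝ (Fin n) → ℝ → ℝ)
    (hUt : ∀ x t, Ut x t = U (x - xs) t - 2 * C₁ * a * ∫ s in (0 : ℝ)..t, c s) :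
    ∀ (x : EuclideanSpace ℝ (Fin n)) (t : ℝ), 0 ≤ t → t ≤ a⁻¹ → 0 < Ut x t →
      deriv (fun s => Ut x s) t ≤
        (m - 1) * Ut x t * lapl (fun y => Ut y t) x
        + ‖gradient (fun y => Ut y t) x‖ ^ 2
        - C₁ * a * (‖gradient (fun y => Ut y t) x‖ + a * Ut x t) := by
  intro x t ht hta hpos
  have hnR : (1 : ℝ) ≤ n := by exact_mod_cast hn
  have hden : 0 < (m - 1) * n + 2 := by nlinarith
  have hl0 : 0 < lam := by rw [hlam]; positivity
  have hlm : (m - 1) * n * lam = 1 - 2 * lam := by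
    rw [hlam]; field_simp; ring
  have hl2 : 2 * lam ≤ 1 := by
    have : 0 ≤ (m - 1) * n * lam := by
      have : 0 < m - 1 := by linarith
      positivity
    linarith
  have hC0 : 0 < C := by rw [hC]; positivity
  have hC1 : C ≤ 1 := by
    rw [hC]; exact Real.rpow_le_one ha.le (by linarith) (by linarith)
  have hT : 0 < t + 1 := by linarith
  set I : ℝ := ∫ s in (0 : ℝ)..t, c s with hI
  have hI0 : 0 ≤ I := by
    apply intervalIntegral.integral_nonneg ht
    intro u hu
    have : 0 < u + 1 := by linarith [hu.1]
    rw [hc]; positivity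
  set P : ℝ := (t + 1) ^ lam with hP
  have hP0 : 0 < P := by positivity
  have hP2 : (t + 1) ^ (2 * lam) = P ^ 2 := by
    rw [hP, mul_comm, Real.rpow_mul hT.le]; norm_cast
  have hPs : P ^ 2 ≤ t + 1 := by
    rw [← hP2]
    calc (t + 1) ^ (2 * lam) ≤ (t + 1) ^ (1 : ℝ) :=
          Real.rpow_le_rpow_of_exponent_le (by linarith) hl2
      _ = t + 1 := Real.rpow_one _
  have hct : c t = √C * P / (t + 1) := by
    rw [hc, Real.rpow_sub_one hT.ne', hP]; ring
  set S := √C with hS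
  have hS0 : 0 < S := Real.sqrt_pos.2 hC0
  have hSS : S ^ 2 = C := Real.sq_sqrt hC0.le
  have hS1 : S ≤ 1 := by rw [hS]; exact Real.sqrt_le_one.2 hC1
  -- spatial part
  have hfun : (fun y => Ut y t) = fun y => (C * P ^ 2 / (t + 1) - 2 * C₁ * a * I)
      - lam / (2 * (t + 1)) * ‖y - xs‖ ^ 2 := by
    funext y
    rw [hUt, hU, hP2]; field_simp; ring
  rw [hfun, quad_lapl, quad_gradient, norm_smul]
  have hUx : Ut x t = (C * P ^ 2 / (t + 1) - 2 * C₁ * a * I)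
      - lam / (2 * (t + 1)) * ‖x - xs‖ ^ 2 := congrFun hfun x
  set r := ‖x - xs‖ with hr
  have hr0 : 0 ≤ r := norm_nonneg _
  have hnorm : ‖-(2 * (lam / (2 * (t + 1))))‖ = lam / (t + 1) := by
    rw [norm_neg, Real.norm_of_nonneg (by positivity)]; field_simp
  rw [hnorm]
  -- time derivative
  have hcont : ∀ u : ℝ, 0 < u + 1 → ContinuousAt c u := by
    intro u hu
    have : c = fun t => S * (t + 1) ^ (lam - 1) := funext hc
    rw [this]
    exact continuousAt_const.mul
      ((continuousAt_id.add continuousAt_const).rpow_const (Or.inl hu.ne'))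
  have hmeas : Measurable c := by
    have : c = fun t => S * (t + 1) ^ (lam - 1) := funext hc
    rw [this]; fun_prop
  have hInt : HasDerivAt (fun s => ∫ u in (0 : ℝ)..s, c u) (c t) t := by
    apply intervalIntegral.integral_hasDerivAt_right
    · apply ContinuousOn.intervalIntegrable
      intro u hu
      rw [uIcc_of_le ht] at hu
      exact (hcont u (by linarith [hu.1])).continuousWithinAt
    · exact hmeas.stronglyMeasurable.stronglyMeasurableAtFilter
    · exact hcont t hT
  have hd1 : HasDerivAt (fun s : ℝ => s + 1) 1 t := (hasDerivAt_id t).add_const 1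
  have hd2 : HasDerivAt (fun s : ℝ => (s + 1) ^ (2 * lam)) (2 * lam * P ^ 2 / (t + 1)) t := by
    have h := hd1.rpow_const (p := 2 * lam) (Or.inl hT.ne')
    rw [Real.rpow_sub_one hT.ne', hP2] at h
    convert h using 1; ring
  have hd3 := ((((hd2.const_mul C).sub_const (lam / 2 * r ^ 2)).div hd1 hT.ne').sub
    (hInt.const_mul (2 * C₁ * a)))
  have hfunt : (fun s => Ut x s) = fun s => (C * (s + 1) ^ (2 * lam) - lam / 2 * r ^ 2) / (s + 1)
      - 2 * C₁ * a * ∫ u in (0 : ℝ)..s, c u := by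
    funext s; rw [hUt, hU]
  have hder : deriv (fun s => Ut x s) t =
      (C * (2 * lam * P ^ 2 / (t + 1)) * (t + 1) - (C * P ^ 2 - lam / 2 * r ^ 2) * 1)
        / (t + 1) ^ 2 - 2 * C₁ * a * c t := by
    rw [hfunt, ← hP2]
    rw [← hP2] at hd3
    exact hd3.deriv
  rw [hder]
  -- bounds
  set V := Ut x t with hV
  have hUpos : 0 < C * P ^ 2 - lam / 2 * r ^ 2 := by
    have h1 : 0 ≤ 2 * C₁ * a * I := by positivity
    have h2 : 0 < C * P ^ 2 / (t + 1) - lam / (2 * (t + 1)) * r ^ 2 := by linarith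
    have h3 : C * P ^ 2 / (t + 1) - lam / (2 * (t + 1)) * r ^ 2
      = (C * P ^ 2 - lam / 2 * r ^ 2) / (t + 1) := by field_simp
    rw [h3] at h2
    exact (div_pos_iff_of_pos_right hT).1 h2
  have hb1 : lam / (t + 1) * r ≤ c t := by
    rw [hct]
    have : lam * r ≤ S * P := by
      refine abs_le_of_sq_le_sq' ?_ (by positivity) |>.2
      rw [mul_pow, mul_pow, hSS]
      nlinarith [mul_nonneg (mul_nonneg hl0.le (sq_nonneg r)) (by linarith : (0:ℝ) ≤ 1 - 2 * lam), mul_pos hl0 hUpos, mul_pos hC0 (pow_pos hP0 2)]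
    rw [div_mul_eq_mul_div]
    gcongr
  have hb2 : a * V ≤ c t := by
    have h1 : V ≤ C * P ^ 2 / (t + 1) := by
      have h1 : 0 ≤ 2 * C₁ * a * I := by positivity
      have h2 : 0 ≤ lam / (2 * (t + 1)) * r ^ 2 := by positivity
      linarith
    have haT : a * (t + 1) ≤ 1 + a := by
      have : a * t ≤ a * a⁻¹ := by gcongr
      rw [mul_inv_cancel₀ ha.ne'] at this
      linarith
    have haP : a * P ≤ 1 := by
      have : (a * P) ^ 2 ≤ 1 := by
        calc (a * P) ^ 2 = a * (a * P ^ 2) := by ring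
          _ ≤ a * (a * (t + 1)) := by gcongr
          _ ≤ a * (1 + a) := by gcongr
          _ ≤ 1 := by nlinarith
      have h0 : 0 ≤ a * P := by positivity
      nlinarith
    calc a * V ≤ a * (C * P ^ 2 / (t + 1)) := by gcongr
      _ = (S * P / (t + 1)) * (S * (a * P)) := by rw [← hSS]; ring
      _ ≤ (S * P / (t + 1)) * 1 := by
          gcongr
          have : 0 ≤ a * P := by positivity
          nlinarith
      _ = c t := by rw [hct, mul_one]
  have hb3 : C₁ * a * (lam / (t + 1) * r + a * V) ≤ C₁ * a * (2 * c t) := by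
    gcongr; linarith
  have hmain : (C * (2 * lam * P ^ 2 / (t + 1)) * (t + 1) - (C * P ^ 2 - lam / 2 * r ^ 2) * 1)
        / (t + 1) ^ 2 ≤ (m - 1) * V * (-(2 * (lam / (2 * (t + 1)))) * n)
          + (lam / (t + 1) * r) ^ 2 := by
    have e : (m - 1) * V * (-(2 * (lam / (2 * (t + 1)))) * n) = -(1 - 2 * lam) * V / (t + 1) := by
      rw [← hlm]; field_simp
    rw [e, hUx]
    have h1 : 0 ≤ (1 - 2 * lam) * (2 * C₁ * a * I) / (t + 1) := by
      have : 0 ≤ 1 - 2 * lam := by linarith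
      positivity
    refine le_of_sub_nonneg (h1.trans_eq ?_)
    field_simp
    ring
  linarith
end

section
/- Let m > 1, n ≥ 1, λ = ((m−1)n + 2)^{−1}, C₁ > 0 and x* ∈ ℝ^n. Set C = a^{λ/2}, U(x,t) = ( C(t+1)^{2λ} − (λ/2)|x|² ) / (t+1), c(t) = √C (t+1)^{λ−1}, and Ũ(x,t) = U(x − x*, t) − 2C₁ a ∫₀^t c(s) ds. Then there exists a₁ > 0, depending only on m, n and C₁, such that for all 0 < a < a₁ and all x with |x − x*| ≤ 3, one has Ũ(x, a^{−1} − 1/2) ≥ a^{1−λ}. -/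
open Real MeasureTheory Metric Set Filter
open scoped RealInnerProductSpace

/-- **Lower bound for the lowered Barenblatt barrier at the final time.** There is
`a₁ > 0` (depending only on `m`, `n`, `C₁`) so that for all `0 < a < a₁`, the lowered
Barenblatt profile `Ũ` satisfies `Ũ(x, a⁻¹ − 1/2) ≥ a^{1−λ}` on `{|x − x*| ≤ 3}`. -/
theorem lowered_barenblatt_final_lower_bound
    {n : ℕ} (hn : 1 ≤ n) (m : ℝ) (hm : 1 < m)
    (lam C₁ : ℝ) (hlam : lam = ((m - 1) * n + 2)⁻¹) (hC₁ : 0 < C₁)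
    (xs : EuclideanSpace ℝ (Fin n)) :
    ∃ a₁ : ℝ, 0 < a₁ ∧
      ∀ a : ℝ, 0 < a → a < a₁ →
        ∀ (U : EuclideanSpace ℝ (Fin n) → ℝ → ℝ) (c : ℝ → ℝ)
          (Ut : EuclideanSpace ℝ (Fin n) → ℝ → ℝ),
          (∀ x t, U x t =
            (a ^ (lam / 2) * (t + 1) ^ (2 * lam) - lam / 2 * ‖x‖ ^ 2) / (t + 1)) →
          (∀ t, c t = Real.sqrt (a ^ (lam / 2)) * (t + 1) ^ (lam - 1)) →
          (∀ x t, Ut x t = U (x - xs) t - 2 * C₁ * a * ∫ s in (0 : ℝ)..t, c s) →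
          ∀ x : EuclideanSpace ℝ (Fin n), ‖x - xs‖ ≤ 3 →
            Ut x (a⁻¹ - 1 / 2) ≥ a ^ (1 - lam) := by
  have hn' : (1:ℝ) ≤ n := by exact_mod_cast hn
  have hden : 2 < (m - 1) * n + 2 := by nlinarith
  have hl0 : 0 < lam := by rw [hlam]; exact inv_pos.mpr (by linarith)
  have hl1 : lam < 1 / 2 := by
    rw [hlam, one_div]; exact inv_strictAnti₀ (by norm_num) hden
  set K : ℝ := 4 * C₁ / lam with hK
  have hKpos : 0 < K := by positivity
  set b : ℝ := 1 / (2 * (4 + K)) with hb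
  have hbpos : 0 < b := by positivity
  refine ⟨min 1 (b ^ (4 / lam)), lt_min one_pos (rpow_pos_of_pos hbpos _), ?_⟩
  intro a ha haa U c Ut hU hc hUt x hx
  have ha1 : a < 1 := lt_of_lt_of_le haa (min_le_left _ _)
  have hab : a < b ^ (4 / lam) := lt_of_lt_of_le haa (min_le_right _ _)
  set s : ℝ := a ^ (lam / 4) with hs
  have hspos : 0 < s := rpow_pos_of_pos ha _
  have hsb : s < b := by
    have h := rpow_lt_rpow ha.le hab (show 0 < lam / 4 by positivity)
    rw [← rpow_mul hbpos.le] at h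
    have e : 4 / lam * (lam / 4) = 1 := by field_simp
    rwa [e, rpow_one] at h
  have hs1 : s * (4 + K) < 1 / 2 := by
    rw [hb, lt_div_iff₀ (by positivity)] at hsb
    linarith
  have hs2 : a ^ (lam / 2) = s ^ 2 := by
    rw [hs, ← rpow_natCast, ← rpow_mul ha.le]; congr 1; push_cast; ring
  have hs4 : a ^ lam = s ^ 4 := by
    rw [hs, ← rpow_natCast, ← rpow_mul ha.le]; congr 1; push_cast; ring
  have hgoal : a ^ (1 - lam) = a / s ^ 4 := by
    rw [rpow_sub ha, rpow_one, hs4]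
  set T : ℝ := a⁻¹ - 1 / 2 + 1 with hT
  have hainv : 1 < a⁻¹ := (one_lt_inv₀ ha).mpr ha1
  have hT1 : a⁻¹ ≤ T := by rw [hT]; linarith
  have hT2 : T ≤ 2 * a⁻¹ := by rw [hT]; linarith
  have hTpos : 0 < T := by linarith
  set p : ℝ := T ^ lam with hp
  have hp1 : 1 / s ^ 4 ≤ p := by
    have h := rpow_le_rpow (inv_pos.mpr ha).le hT1 hl0.le
    rw [inv_rpow ha.le, hs4] at h
    rwa [one_div]
  have hp2 : p ≤ 2 / s ^ 4 := by
    have h := rpow_le_rpow hTpos.le hT2 hl0.le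
    rw [mul_rpow (by norm_num) (inv_pos.mpr ha).le, inv_rpow ha.le, hs4] at h
    have h2 : (2:ℝ) ^ lam ≤ 2 := by
      have := rpow_le_rpow_of_exponent_le (show (1:ℝ) ≤ 2 by norm_num) (show lam ≤ 1 by linarith)
      rwa [rpow_one] at this
    calc p ≤ 2 ^ lam * (s ^ 4)⁻¹ := h
      _ ≤ 2 * (s ^ 4)⁻¹ := by gcongr
      _ = 2 / s ^ 4 := by rw [div_eq_mul_inv]
  have hpp : T ^ (2 * lam) = p ^ 2 := by
    rw [hp, ← rpow_natCast, ← rpow_mul hTpos.le]; congr 1; push_cast; ring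
  have hint : ∫ t in (0 : ℝ)..(a⁻¹ - 1 / 2), c t = s * ((p - 1) / lam) := by
    simp_rw [hc]
    rw [intervalIntegral.integral_const_mul, hs2, sqrt_sq hspos.le]
    congr 1
    rw [intervalIntegral.integral_comp_add_right (fun u => u ^ (lam - 1)) 1,
      integral_rpow (Or.inl (by linarith))]
    rw [← hT, zero_add, sub_add_cancel, one_rpow]
  rw [hUt, hU, hint, ← hT, hpp, hs2, hgoal]
  have hTi1 : a / 2 ≤ 1 / T := by
    rw [div_le_div_iff₀ (by norm_num) hTpos]
    have := mul_le_mul_of_nonneg_left hT2 ha.le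
    have e : a * (2 * a⁻¹) = 2 := by field_simp
    linarith
  have hTi2 : 1 / T ≤ a := by
    rw [div_le_iff₀ hTpos]
    have := mul_le_mul_of_nonneg_left hT1 ha.le
    rwa [mul_inv_cancel₀ ha.ne'] at this
  have hx2 : ‖x - xs‖ ^ 2 ≤ 9 := by nlinarith [norm_nonneg (x - xs)]
  have hA : (a / 2) / s ^ 6 ≤ s ^ 2 * p ^ 2 * (1 / T) := by
    calc (a / 2) / s ^ 6 = s ^ 2 * (1 / s ^ 4) ^ 2 * (a / 2) := by field_simp
      _ ≤ s ^ 2 * p ^ 2 * (1 / T) := by gcongr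
  have hB : lam / 2 * ‖x - xs‖ ^ 2 * (1 / T) ≤ 9 / 4 * a := by
    calc lam / 2 * ‖x - xs‖ ^ 2 * (1 / T) ≤ (1 / 2) / 2 * 9 * a := by gcongr
      _ = 9 / 4 * a := by ring
  have hD : 2 * C₁ * a * (s * ((p - 1) / lam)) ≤ a * K / s ^ 3 := by
    calc 2 * C₁ * a * (s * ((p - 1) / lam)) ≤ 2 * C₁ * a * (s * ((2 / s ^ 4) / lam)) := by
          gcongr; linarith
      _ = a * K / s ^ 3 := by rw [hK]; field_simp; ring
  have hsl : s ≤ 1 := by linarith [mul_pos hspos hKpos]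
  have key : a / s ^ 4 + 9 / 4 * a + a * K / s ^ 3 ≤ (a / 2) / s ^ 6 := by
    have e : a / s ^ 4 + 9 / 4 * a + a * K / s ^ 3
        = a * (s ^ 2 + 9 / 4 * s ^ 6 + K * s ^ 3) / s ^ 6 := by
      field_simp
    rw [e]
    have h2 : s ^ 2 ≤ s := pow_le_of_le_one hspos.le hsl (by norm_num)
    have h3 : s ^ 3 ≤ s := pow_le_of_le_one hspos.le hsl (by norm_num)
    have h6 : s ^ 6 ≤ s := pow_le_of_le_one hspos.le hsl (by norm_num)
    have h3K := mul_le_mul_of_nonneg_left h3 hKpos.le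
    have : s ^ 2 + 9 / 4 * s ^ 6 + K * s ^ 3 ≤ 1 / 2 := by linarith
    have h := mul_le_mul_of_nonneg_left this ha.le
    refine div_le_div_of_nonneg_right ?_ (by positivity)
    linarith
  have e : (s ^ 2 * p ^ 2 - lam / 2 * ‖x - xs‖ ^ 2) / T
      = s ^ 2 * p ^ 2 * (1 / T) - lam / 2 * ‖x - xs‖ ^ 2 * (1 / T) := by ring
  rw [e]
  linarith
end
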